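/- If g : ℝ^r → ℝ is G-Lipschitz, then its ball smoothing g_δ is differentiable with gradient ∇g_δ(y) = (r/δ) E_{v ∼ S^{r-1}}[g(y + δv) v], where S^{r-1} is the unit sphere in ℝ^r. -/

import Mathlib

open MeasureTheory

/-- Ball smoothing operator: average of `g` over a Euclidean ball of radius `δ`. -/
noncomputable def ballSmooth {r : ℕ} (δ : ℝ) (g : EuclideanSpace ℝ (Fin r) → ℝ) :
    EuclideanSpace ℝ (Fin r) → ℝ :=
  fun x => ⨍ v in Metric.closedBall (0 : EuclideanSpace ℝ (Fin r)) 1, g (x + δ • v)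

section InvariantMeasure

variable {E : Type*} [NormedAddCommGroup E] [InnerProductSpace ℝ E]
  [MeasurableSpace E] [BorelSpace E]

/-- The characteristic function of a rotation-invariant measure is radial. -/
theorem charFun_eq_of_norm_eq {μ : Measure E} (hμ : ∀ R : E ≃ₗᵢ[ℝ] E, μ.map R = μ)
    {s t : E} (h : ‖s‖ = ‖t‖) : charFun μ s = charFun μ t := by
  let R : E ≃ₗᵢ[ℝ] E := (Submodule.span ℝ {s - t})ᗮ.reflection
  have hR : R s = t := Submodule.reflection_sub h
  have key : charFun (μ.map R) t = charFun μ s := by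
    have h_emb : MeasurableEmbedding R := R.toHomeomorph.measurableEmbedding
    rw [charFun_apply, charFun_apply, h_emb.integral_map]
    refine integral_congr_ae (.of_forall fun x => ?_)
    have : inner ℝ (R x) t = inner ℝ x s := by rw [← hR, R.inner_map_map]
    simpa using congrArg (fun a : ℝ => Complex.exp (a * Complex.I)) this
  rw [← key, hμ]

variable [FiniteDimensional ℝ E]

/-- Two rotation-invariant measures carried by the unit sphere are proportional. -/
theorem measure_univ_smul_eq_of_map_eq {μ ν : Measure E} [IsProbabilityMeasure μ]
    [IsFiniteMeasure ν] (hμ : ∀ R : E ≃ₗᵢ[ℝ] E, μ.map R = μ) (hν : ∀ R : E ≃ₗᵢ[ℝ] E, ν.map R = ν)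
    (hμ_norm : ∀ᵐ x ∂μ, ‖x‖ = 1) (hν_norm : ∀ᵐ x ∂ν, ‖x‖ = 1) :
    ν Set.univ • μ = ν := by
  have : IsFiniteMeasure (ν Set.univ • μ) := μ.smul_finite (measure_ne_top ν _)
  refine Measure.ext_of_charFun (funext fun t => ?_)
  have h_left : ∫ u, charFun μ (‖t‖ • u) ∂ν = ν.real Set.univ • charFun μ t := by
    rw [← integral_const]
    refine integral_congr_ae (hν_norm.mono fun u hu => charFun_eq_of_norm_eq hμ ?_)
    simp [norm_smul, hu]
  have h_right : ∫ x, charFun ν (‖t‖ • x) ∂μ = charFun ν t := by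
    rw [← one_smul ℝ (charFun ν t), ← probReal_univ (μ := μ), ← integral_const]
    refine integral_congr_ae (hμ_norm.mono fun x hx => charFun_eq_of_norm_eq hν ?_)
    simp [norm_smul, hx]
  have h_swap : ∫ u, charFun μ (‖t‖ • u) ∂ν = ∫ x, charFun ν (‖t‖ • x) ∂μ := by
    simp only [charFun_apply]
    rw [integral_integral_swap]
    · simp only [inner_smul_right, real_inner_comm]
    · refine Integrable.of_bound (C := 1) (Continuous.aestronglyMeasurable ?_)
        (.of_forall fun z => ?_)
      · simp only [Function.uncurry_def]
        fun_prop
      · simp only [Function.uncurry_def, Complex.norm_exp_ofReal_mul_I, le_refl]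
  rw [← h_right, ← h_swap, h_left, charFun_apply, charFun_apply, integral_smul_measure]
  rfl

open scoped Pointwise in
/-- The surface measure of the unit sphere is rotation-invariant. -/
theorem map_coe_toSphere_map (R : E ≃ₗᵢ[ℝ] E) :
    ((volume : Measure E).toSphere.map (↑)).map R = (volume : Measure E).toSphere.map (↑) := by
  have hR : Measurable R := R.continuous.measurable
  ext s hs
  rw [Measure.map_apply hR hs, Measure.map_apply measurable_subtype_coe (hR hs),
    Measure.map_apply measurable_subtype_coe hs,
    Measure.toSphere_apply' _ (measurable_subtype_coe (hR hs)),
    Measure.toSphere_apply' _ (measurable_subtype_coe hs)]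
  congr 1
  refine Eq.trans ?_ (MeasurePreserving.measure_preimage_equiv
    (f := R.toHomeomorph.toMeasurableEquiv) (μa := volume) (μb := volume) R.measurePreserving _)
  congr 1
  ext x
  simp only [Set.mem_smul, Set.mem_preimage, Set.mem_image, Subtype.exists,
    Homeomorph.toMeasurableEquiv_coe, LinearIsometryEquiv.coe_toHomeomorph]
  constructor
  · rintro ⟨a, ha, _, ⟨z, hz, hzs, rfl⟩, rfl⟩
    exact ⟨a, ha, R z, ⟨R z, by simpa using hz, hzs, rfl⟩, by simp⟩
  · rintro ⟨a, ha, _, ⟨z, hz, hzs, rfl⟩, hx⟩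
    refine ⟨a, ha, R.symm z, ⟨R.symm z, by simpa using hz, by simpa using hzs, rfl⟩, ?_⟩
    apply R.injective
    simpa using hx

/-- Integration against a rotation-invariant probability measure on the unit sphere is, up to the
total mass, integration against the surface measure. -/
theorem integral_toSphere_eq_smul_integral {F : Type*} [NormedAddCommGroup F] [NormedSpace ℝ F]
    {σ : Measure E} [IsProbabilityMeasure σ] (hσ : ∀ R : E ≃ₗᵢ[ℝ] E, σ.map R = σ)
    (hσ_norm : ∀ᵐ x ∂σ, ‖x‖ = 1) (f : E → F) :
    ∫ θ, f θ ∂(volume : Measure E).toSphere =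
      (Module.finrank ℝ E * (volume : Measure E).real (Metric.ball 0 1)) • ∫ x, f x ∂σ := by
  have h_emb : MeasurableEmbedding ((↑) : Metric.sphere (0 : E) 1 → E) :=
    .subtype_coe Metric.isClosed_sphere.measurableSet
  have h_norm : ∀ᵐ x ∂(volume : Measure E).toSphere.map ((↑) : Metric.sphere (0 : E) 1 → E),
      ‖x‖ = 1 := by
    rw [h_emb.ae_map_iff]
    exact .of_forall fun x => by simp
  rw [← h_emb.integral_map, ← measure_univ_smul_eq_of_map_eq hσ map_coe_toSphere_map hσ_norm h_norm,
    integral_smul_measure, Measure.map_apply measurable_subtype_coe .univ, Set.preimage_univ,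
    Measure.toSphere_apply_univ]
  simp [measureReal_def]

end InvariantMeasure

/-- Integration in polar coordinates. -/
theorem integral_eq_integral_Ioi_toSphere {E F : Type*} [NormedAddCommGroup E] [NormedSpace ℝ E]
    [FiniteDimensional ℝ E] [Nontrivial E] [MeasurableSpace E] [BorelSpace E]
    [NormedAddCommGroup F] [NormedSpace ℝ F] (μ : Measure E) [μ.IsAddHaarMeasure]
    {f : E → F} (hf : Integrable f μ) :
    ∫ x, f x ∂μ = ∫ t in Set.Ioi (0 : ℝ),
      t ^ (Module.finrank ℝ E - 1) • ∫ θ, f (t • (θ : E)) ∂μ.toSphere := by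
  have h_emb := (homeomorphUnitSphereProd E).measurableEmbedding
  have h_mp := μ.measurePreserving_homeomorphUnitSphereProd
  let k : Metric.sphere (0 : E) 1 × Set.Ioi (0 : ℝ) → F := fun z => f (z.2.1 • z.1.1)
  have hk (x : ({0}ᶜ : Set E)) : k (homeomorphUnitSphereProd E x) = f x := by
    simp only [k]
    rw [← homeomorphUnitSphereProd_symm_apply_coe, Homeomorph.symm_apply_apply]
  have h_int : Integrable k (μ.toSphere.prod (.volumeIoiPow (Module.finrank ℝ E - 1))) := by
    rw [← h_mp.integrable_comp_emb h_emb]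
    refine Integrable.congr (f := fun x : ({0}ᶜ : Set E) => f x) ?_
      (.of_forall fun x => (hk x).symm)
    have := (integrableOn_iff_comap_subtypeVal (f := f) (μ := μ)
      (measurableSet_singleton (0 : E)).compl).1 hf.integrableOn
    exact this
  calc ∫ x, f x ∂μ = ∫ x : ({0}ᶜ : Set E), f x.1 ∂(μ.comap (↑)) := by
        rw [integral_subtype_comap (measurableSet_singleton _).compl f,
          restrict_compl_singleton]
    _ = ∫ z, k z ∂μ.toSphere.prod (.volumeIoiPow (Module.finrank ℝ E - 1)) := by
        rw [← h_mp.integral_comp h_emb]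
        simp only [hk]
    _ = ∫ t : Set.Ioi (0 : ℝ), ∫ θ, f (t.1 • θ.1) ∂μ.toSphere
          ∂(.volumeIoiPow (Module.finrank ℝ E - 1)) := integral_prod_symm k h_int
    _ = _ := by
        simp only [Measure.volumeIoiPow, ENNReal.ofReal]
        rw [integral_withDensity_eq_integral_smul
            (measurable_subtype_coe.pow_const _).real_toNNReal,
          integral_subtype_comap measurableSet_Ioi fun a : ℝ =>
            Real.toNNReal (a ^ (Module.finrank ℝ E - 1)) • ∫ θ, f (a • θ.1) ∂μ.toSphere]
        refine setIntegral_congr_fun measurableSet_Ioi fun x hx => ?_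
        simp only [NNReal.smul_def, Real.coe_toNNReal _ (pow_nonneg (le_of_lt hx) _)]

section Gauss

open Filter Topology
open scoped NNReal

variable {E : Type*} [NormedAddCommGroup E] [InnerProductSpace ℝ E]

theorem hasLineDerivAt_norm {x : E} (hx : x ≠ 0) (e : E) :
    HasLineDerivAt ℝ (fun z : E => ‖z‖) (inner ℝ x e / ‖x‖) x e := by
  have h_line : HasDerivAt (fun t : ℝ => x + t • e) e 0 := by
    simpa using ((hasDerivAt_id (0 : ℝ)).smul_const e).const_add x
  have h := h_line.norm_sq.sqrt (by simpa using hx)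
  simp only [zero_smul, add_zero, Real.sqrt_sq (norm_nonneg _)] at h
  rwa [mul_div_mul_left _ _ two_ne_zero] at h

/-- The directional derivative of the conical cutoff `x ↦ max (R - ‖x‖) 0`. -/
theorem lineDeriv_max_sub_norm {R : ℝ} {x : E} (hx : x ≠ 0) (hxR : ‖x‖ ≠ R) (e : E) :
    lineDeriv ℝ (fun z : E => max (R - ‖z‖) 0) x e =
      (Metric.ball (0 : E) R).indicator (fun z => -(inner ℝ z e / ‖z‖)) x := by
  refine HasLineDerivAt.lineDeriv ?_
  rcases hxR.lt_or_gt with h | h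
  · rw [Set.indicator_of_mem (by simpa using h)]
    have h_norm : HasLineDerivAt ℝ (fun z : E => R - ‖z‖) (-(inner ℝ x e / ‖x‖)) x e :=
      HasDerivAt.const_sub R (hasLineDerivAt_norm hx e)
    refine h_norm.congr_of_eventuallyEq ?_
    filter_upwards [continuous_norm.continuousAt.eventually_lt continuousAt_const h] with z hz
    exact max_eq_left (sub_nonneg.2 hz.le)
  · rw [Set.indicator_of_notMem (by simpa using h.le)]
    have h_const : HasLineDerivAt ℝ (fun _ : E => (0 : ℝ)) 0 x e := hasDerivAt_const (0 : ℝ) (0 : ℝ)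
    refine h_const.congr_of_eventuallyEq ?_
    filter_upwards [continuousAt_const.eventually_lt continuous_norm.continuousAt h] with z hz
    exact max_eq_right (sub_nonpos.2 hz.le)

variable [FiniteDimensional ℝ E] [MeasurableSpace E] [BorelSpace E]

/-- Integration by parts against the conical cutoff `x ↦ max (R - ‖x‖) 0`. -/
theorem integral_lineDeriv_mul_max_sub_norm {C : ℝ≥0} {h : E → ℝ} (hh : LipschitzWith C h)
    [Nontrivial E] (e : E) {R : ℝ} (hR : 0 < R) :
    ∫ x, lineDeriv ℝ h x e * max (R - ‖x‖) 0 =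
      ∫ x, (Metric.ball (0 : E) R).indicator (fun z => h z * (inner ℝ z e / ‖z‖)) x := by
  have h_lip : LipschitzWith 1 (fun z : E => max (R - ‖z‖) 0) := by
    refine LipschitzWith.max_const (LipschitzWith.of_dist_le_mul fun x y => ?_) 0
    simpa [dist_eq_norm, Real.norm_eq_abs, abs_sub_comm] using abs_norm_sub_norm_le x y
  have h_supp : HasCompactSupport (fun z : E => max (R - ‖z‖) 0) := by
    refine .of_support_subset_isCompact (isCompact_closedBall (0 : E) R) fun z hz => ?_
    contrapose! hz
    simp only [Metric.mem_closedBall, dist_zero_right, not_le] at hz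
    simpa using hz.le
  rw [hh.integral_lineDeriv_mul_eq h_lip h_supp e]
  refine integral_congr_ae ?_
  have h0 : ∀ᵐ x : E, x ≠ 0 := by simp [ae_iff]
  have h1 : ∀ᵐ x : E, ‖x‖ ≠ R := by
    rw [ae_iff]
    simpa [Metric.sphere, Set.ext_iff] using Measure.addHaar_sphere_of_ne_zero volume (0 : E) hR.ne'
  filter_upwards [h0, h1] with x hx0 hxR
  rw [lineDeriv_max_sub_norm hx0 hxR]
  by_cases hx : x ∈ Metric.ball (0 : E) R
  · simp [Set.indicator_of_mem hx, inner_neg_right, neg_div, mul_comm]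
  · simp [Set.indicator_of_notMem hx]

theorem hasDerivAt_integral_mul_max_sub_norm {u : E → ℝ} (hu : AEStronglyMeasurable u) {C : ℝ}
    (hC : ∀ x, ‖u x‖ ≤ C) {R : ℝ} (hR : 0 < R) :
    HasDerivAt (fun R : ℝ => ∫ x, u x * max (R - ‖x‖) 0)
      (∫ x in Metric.closedBall (0 : E) R, u x) R := by
  have hC0 : 0 ≤ C := (norm_nonneg _).trans (hC 0)
  rw [← integral_indicator Metric.isClosed_closedBall.measurableSet]
  have h_meas (S : ℝ) : AEStronglyMeasurable (fun x : E => u x * max (S - ‖x‖) 0) :=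
    hu.mul (by fun_prop : Continuous fun x : E => max (S - ‖x‖) 0).aestronglyMeasurable
  have h_ball (S a : ℝ) :
      Integrable ((Metric.closedBall (0 : E) S).indicator fun _ => a) := by
    rw [integrable_indicator_iff Metric.isClosed_closedBall.measurableSet]
    exact integrableOn_const (isCompact_closedBall (0 : E) S).measure_lt_top.ne
  refine (hasDerivAt_integral_of_dominated_loc_of_lip (s := Set.Iio (R + 1))
    (bound := (Metric.closedBall (0 : E) (R + 1)).indicator fun _ => C)
    (Iio_mem_nhds (lt_add_one R)) (.of_forall h_meas) ?_ ?_ (.of_forall fun x => ?_)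
    (h_ball _ _) ?_).2
  · refine (h_ball R (C * R)).mono' (h_meas R) (.of_forall fun x => ?_)
    by_cases hx : ‖x‖ ≤ R
    · rw [Set.indicator_of_mem (by simpa using hx), norm_mul, Real.norm_of_nonneg (le_max_right _ _)]
      exact mul_le_mul (hC x) (max_le (by simp) hR.le) (le_max_right _ _) hC0
    · rw [Set.indicator_of_notMem (by simpa using hx), max_eq_right (by linarith)]
      simp
  · exact hu.indicator Metric.isClosed_closedBall.measurableSet
  · refine LipschitzOnWith.of_dist_le_mul fun a ha b hb => ?_
    simp only [Set.mem_Iio] at ha hb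
    by_cases hx : ‖x‖ ≤ R + 1
    · rw [Set.indicator_of_mem (by simpa using hx), Real.dist_eq, ← mul_sub, abs_mul,
        Real.coe_nnabs, abs_of_nonneg hC0]
      refine mul_le_mul (hC x) ?_ (abs_nonneg _) hC0
      simpa [Real.dist_eq] using abs_max_sub_max_le_abs (a - ‖x‖) (b - ‖x‖) 0
    · rw [max_eq_right (by linarith), max_eq_right (by linarith), dist_self]
      positivity
  · have h_sphere : ∀ᵐ x : E, ‖x‖ ≠ R := by
      rw [ae_iff]
      simpa [Metric.sphere] using Measure.addHaar_sphere_of_ne_zero volume (0 : E) hR.ne'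
    filter_upwards [h_sphere] with x hx
    rcases hx.lt_or_gt with hx | hx
    · rw [Set.indicator_of_mem (by simpa using hx.le)]
      have : HasDerivAt (fun S : ℝ => u x * (S - ‖x‖)) (u x) R := by
        simpa using ((hasDerivAt_id R).sub_const ‖x‖).const_mul (u x)
      refine this.congr_of_eventuallyEq ?_
      filter_upwards [Ioi_mem_nhds hx] with S hS
      rw [max_eq_left (sub_nonneg.2 (le_of_lt hS))]
    · rw [Set.indicator_of_notMem (by simpa using hx)]
      refine (hasDerivAt_const R (0 : ℝ)).congr_of_eventuallyEq ?_
      filter_upwards [Iio_mem_nhds hx] with S hS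
      rw [max_eq_right (sub_nonpos.2 (le_of_lt hS)), mul_zero]

theorem hasDerivAt_integral_ball_radial [Nontrivial E] {h : E → ℝ} (hh : Continuous h) (e : E)
    {R : ℝ} (hR : 0 < R) :
    HasDerivAt
      (fun R : ℝ => ∫ x, (Metric.ball (0 : E) R).indicator (fun z => h z * (inner ℝ z e / ‖z‖)) x)
      (R ^ (Module.finrank ℝ E - 1) *
        ∫ θ, h (R • (θ : E)) * inner ℝ (θ : E) e ∂(volume : Measure E).toSphere) R := by
  set ρ : ℝ → ℝ := fun t => t ^ (Module.finrank ℝ E - 1) *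
    ∫ θ, h (t • (θ : E)) * inner ℝ (θ : E) e ∂(volume : Measure E).toSphere with hρ
  have h_cont : Continuous ρ := by
    refine (continuous_pow _).mul ?_
    have := continuous_parametric_integral_of_continuous (μ := (volume : Measure E).toSphere)
      (f := fun (t : ℝ) (θ : Metric.sphere (0 : E) 1) => h (t • (θ : E)) * inner ℝ (θ : E) e)
      (by simp only [Function.uncurry_def]; fun_prop) isCompact_univ
    simpa only [Measure.restrict_univ] using this
  have h_ftc := intervalIntegral.integral_hasDerivAt_right (h_cont.intervalIntegrable 0 R)
    (h_cont.stronglyMeasurableAtFilter _ _) h_cont.continuousAt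
  refine h_ftc.congr_of_eventuallyEq ?_
  filter_upwards [Ioi_mem_nhds hR] with S hS
  rw [integral_eq_integral_Ioi_toSphere, intervalIntegral.integral_of_le (le_of_lt hS),
    integral_Ioc_eq_integral_Ioo, ← integral_indicator measurableSet_Ioi,
    ← integral_indicator measurableSet_Ioo]
  · refine integral_congr_ae (.of_forall fun t => ?_)
    by_cases ht : 0 < t
    · have h_eq (θ : Metric.sphere (0 : E) 1) :
          (Metric.ball (0 : E) S).indicator (fun z => h z * (inner ℝ z e / ‖z‖)) (t • (θ : E)) =
            if t < S then h (t • (θ : E)) * inner ℝ (θ : E) e else 0 := by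
        have h_norm : ‖t • (θ : E)‖ = t := by simp [norm_smul, abs_of_pos ht]
        by_cases htS : t < S
        · rw [Set.indicator_of_mem (by rwa [mem_ball_zero_iff, h_norm]), h_norm,
            real_inner_smul_left, mul_div_cancel_left₀ _ ht.ne', if_pos htS]
        · rw [Set.indicator_of_notMem (by rwa [mem_ball_zero_iff, h_norm]), if_neg htS]
      simp only [Set.indicator_apply, Set.mem_Ioi, Set.mem_Ioo, ht, true_and]
      by_cases htS : t < S <;> simp [h_eq, htS, hρ]
    · simp [ht]
  · rw [integrable_indicator_iff Metric.isOpen_ball.measurableSet]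
    refine Integrable.mul_bdd (c := ‖e‖)
      ((hh.continuousOn.integrableOn_compact (isCompact_closedBall (0 : E) S)).mono_set
        Metric.ball_subset_closedBall) ?_ (.of_forall fun z => ?_)
    · exact Measurable.aestronglyMeasurable (by fun_prop)
    · rw [norm_div, norm_norm]
      exact div_le_of_le_mul₀ (norm_nonneg _) (norm_nonneg _)
        ((norm_inner_le_norm z e).trans_eq (mul_comm _ _))

/-- The divergence theorem on the unit ball for a Lipschitz function. -/
theorem setIntegral_lineDeriv_closedBall [Nontrivial E] {C : ℝ≥0} {h : E → ℝ}
    (hh : LipschitzWith C h) (e : E) :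
    ∫ x in Metric.closedBall (0 : E) 1, lineDeriv ℝ h x e =
      ∫ θ, h θ * inner ℝ (θ : E) e ∂(volume : Measure E).toSphere := by
  have h_left := hasDerivAt_integral_mul_max_sub_norm (u := fun x : E => lineDeriv ℝ h x e)
    (aestronglyMeasurable_lineDeriv hh.continuous _)
    (fun x => norm_lineDeriv_le_of_lipschitz ℝ hh) one_pos
  have h_right := hasDerivAt_integral_ball_radial hh.continuous e one_pos
  simp only [one_pow, one_mul, one_smul] at h_right
  refine h_left.unique (h_right.congr_of_eventuallyEq ?_)
  filter_upwards [Ioi_mem_nhds one_pos] with R hR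
  exact integral_lineDeriv_mul_max_sub_norm hh e hR

end Gauss

open scoped NNReal in
theorem LipschitzWith.comp_add_smul {E F : Type*} [NormedAddCommGroup E] [NormedSpace ℝ E]
    [PseudoMetricSpace F] {K : ℝ≥0} {g : E → F} (hg : LipschitzWith K g) (y : E) (δ : ℝ) :
    LipschitzWith (K * ‖δ‖₊) fun w => g (y + δ • w) :=
  .of_dist_le_mul fun a b => by
    simpa [dist_smul₀, mul_assoc] using hg.dist_le_mul (y + δ • a) (y + δ • b)

open scoped NNReal in
/-- The ball smoothing of a Lipschitz function may be differentiated under the integral sign. -/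
theorem hasFDerivAt_ballSmooth {r : ℕ} {δ : ℝ} (hδ : δ ≠ 0) {K : ℝ≥0}
    {g : EuclideanSpace ℝ (Fin r) → ℝ} (hg : LipschitzWith K g) (y : EuclideanSpace ℝ (Fin r)) :
    IntegrableOn (fun v => fderiv ℝ (fun w => g (y + δ • w)) v)
        (Metric.closedBall (0 : EuclideanSpace ℝ (Fin r)) 1) ∧
      HasFDerivAt (ballSmooth δ g)
        ((volume.real (Metric.closedBall (0 : EuclideanSpace ℝ (Fin r)) 1))⁻¹ • δ⁻¹ •
          ∫ v in Metric.closedBall (0 : EuclideanSpace ℝ (Fin r)) 1,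
            fderiv ℝ (fun w => g (y + δ • w)) v) y := by
  set h : EuclideanSpace ℝ (Fin r) → ℝ := fun w => g (y + δ • w) with h_def
  have h_lip : LipschitzWith (K * ‖δ‖₊) h :=
    hg.comp_add_smul y δ
  have h_cont (x : EuclideanSpace ℝ (Fin r)) : Continuous fun v => g (x + δ • v) :=
    hg.continuous.comp (by fun_prop)
  have h_fin : volume (Metric.closedBall (0 : EuclideanSpace ℝ (Fin r)) 1) ≠ ⊤ :=
    (isCompact_closedBall _ _).measure_lt_top.ne
  have h_int : IntegrableOn (fun v => fderiv ℝ h v)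
      (Metric.closedBall (0 : EuclideanSpace ℝ (Fin r)) 1) :=
    Measure.integrableOn_of_bounded h_fin (measurable_fderiv ℝ h).aestronglyMeasurable
      (M := (K * ‖δ‖₊ : ℝ≥0)) (.of_forall fun v => norm_fderiv_le_of_lipschitz ℝ h_lip)
  refine ⟨h_int, ?_⟩
  have h_main := (hasFDerivAt_integral_of_dominated_loc_of_lip (𝕜 := ℝ) (s := Set.univ) (x₀ := y)
    (μ := volume.restrict (Metric.closedBall (0 : EuclideanSpace ℝ (Fin r)) 1))
    (F := fun x v => g (x + δ • v)) (F' := fun v => δ⁻¹ • fderiv ℝ h v)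
    (bound := fun _ => (K : ℝ)) Filter.univ_mem
    (.of_forall fun x => (h_cont x).aestronglyMeasurable)
    ((h_cont y).continuousOn.integrableOn_compact (isCompact_closedBall _ _))
    ((measurable_fderiv ℝ h).const_smul δ⁻¹).aestronglyMeasurable
    (.of_forall fun v => ?_) (integrableOn_const h_fin) ?_).2
  · rw [integral_smul] at h_main
    have h_avg : ballSmooth δ g = fun x =>
        (volume.real (Metric.closedBall (0 : EuclideanSpace ℝ (Fin r)) 1))⁻¹ •
          ∫ v in Metric.closedBall (0 : EuclideanSpace ℝ (Fin r)) 1, g (x + δ • v) :=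
      funext fun x => setAverage_eq _ _ _
    rw [h_avg]
    exact h_main.fun_const_smul _
  · refine LipschitzOnWith.of_dist_le_mul fun a _ b _ => ?_
    simpa using hg.dist_le_mul (a + δ • v) (b + δ • v)
  · filter_upwards [ae_restrict_of_ae h_lip.ae_differentiableAt] with v hv
    have h_inner : HasFDerivAt (fun x : EuclideanSpace ℝ (Fin r) => v + δ⁻¹ • (x - y))
        (δ⁻¹ • ContinuousLinearMap.id ℝ (EuclideanSpace ℝ (Fin r))) y :=
      (((hasFDerivAt_id y).sub_const y).const_smul δ⁻¹).const_add v
    have h_outer : HasFDerivAt h (fderiv ℝ h v) (v + δ⁻¹ • (y - y)) := by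
      simpa using hv.hasFDerivAt
    have h_comp := h_outer.comp y h_inner
    have h_fun : (h ∘ fun x => v + δ⁻¹ • (x - y)) = fun x => g (x + δ • v) := by
      funext x
      simp only [Function.comp_apply, h_def, smul_add, smul_inv_smul₀ hδ]
      congr 1
      abel
    rw [h_fun] at h_comp
    simpa using h_comp

/-- The ball smoothing of a `G`-Lipschitz function is differentiable, with gradient given by
the sphere-average formula `∇g_δ(y) = (r/δ) E_{v ∼ S^{r-1}}[g(y + δ v) v]`, where the
expectation is with respect to the uniform (i.e. rotation-invariant) probability
distribution `σ` on the unit sphere. -/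
theorem stmt5 (r : ℕ) (G δ : ℝ) (hδ : 0 < δ)
    (g : EuclideanSpace ℝ (Fin r) → ℝ)
    (hg : ∀ x y, |g x - g y| ≤ G * ‖x - y‖)
    (σ : Measure (EuclideanSpace ℝ (Fin r))) [IsProbabilityMeasure σ]
    (hσsphere : σ (Metric.sphere (0 : EuclideanSpace ℝ (Fin r)) 1) = 1)
    (hσinv : ∀ R : EuclideanSpace ℝ (Fin r) ≃ₗᵢ[ℝ] EuclideanSpace ℝ (Fin r), σ.map R = σ) :
    ∀ y, HasGradientAt (ballSmooth δ g)
      (((r : ℝ) / δ) • ∫ v, g (y + δ • v) • v ∂σ) y := by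
  intro y
  have hσ_norm : ∀ᵐ x ∂σ, ‖x‖ = 1 := by
    have := (prob_compl_eq_zero_iff Metric.isClosed_sphere.measurableSet).2 hσsphere
    simpa [ae_iff, Set.compl_def] using this
  obtain ⟨x₀, hx₀⟩ := hσ_norm.exists
  have : Nontrivial (EuclideanSpace ℝ (Fin r)) :=
    ⟨x₀, 0, by rintro rfl; simp at hx₀⟩
  have hg_lip : LipschitzWith G.toNNReal g := LipschitzWith.of_dist_le_mul fun a b => by
    rw [Real.dist_eq, dist_eq_norm]
    exact (hg a b).trans (mul_le_mul_of_nonneg_right (Real.le_coe_toNNReal G) (norm_nonneg _))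
  have h_lip : LipschitzWith (G.toNNReal * ‖δ‖₊) fun w => g (y + δ • w) :=
    hg_lip.comp_add_smul y δ
  have h_cont : Continuous fun w => g (y + δ • w) := h_lip.continuous
  obtain ⟨h_int, h_deriv⟩ := hasFDerivAt_ballSmooth hδ.ne' hg_lip y
  rw [hasGradientAt_iff_hasFDerivAt]
  refine h_deriv.congr_fderiv (ContinuousLinearMap.ext fun e => ?_)
  have h_vec : Integrable (fun v => g (y + δ • v) • v) σ := by
    have h_restrict : σ.restrict (Metric.sphere 0 1) = σ :=
      Measure.restrict_eq_self_of_ae_mem (hσ_norm.mono fun x hx => by simpa using hx)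
    rw [← h_restrict]
    exact (h_cont.smul continuous_id).continuousOn.integrableOn_compact (isCompact_sphere 0 1)
  have h_gauss : ∫ v in Metric.closedBall (0 : EuclideanSpace ℝ (Fin r)) 1,
      fderiv ℝ (fun w => g (y + δ • w)) v e =
        (r * volume.real (Metric.ball (0 : EuclideanSpace ℝ (Fin r)) 1)) *
          ∫ v, g (y + δ • v) * inner ℝ v e ∂σ := by
    rw [← integral_congr_ae (ae_restrict_of_ae (h_lip.ae_differentiableAt.mono
        fun v hv => hv.lineDeriv_eq_fderiv)), setIntegral_lineDeriv_closedBall h_lip e,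
      integral_toSphere_eq_smul_integral hσinv hσ_norm fun v => g (y + δ • v) * inner ℝ v e]
    simp
  have h_vol : volume.real (Metric.closedBall (0 : EuclideanSpace ℝ (Fin r)) 1) =
      volume.real (Metric.ball (0 : EuclideanSpace ℝ (Fin r)) 1) := by
    rw [measureReal_def, measureReal_def, Measure.addHaar_closedBall_eq_addHaar_ball]
  have h_pos : 0 < volume.real (Metric.ball (0 : EuclideanSpace ℝ (Fin r)) 1) :=
    ENNReal.toReal_pos (Metric.measure_ball_pos _ _ one_pos).ne' measure_ball_lt_top.ne
  have h_inner : inner ℝ (∫ v, g (y + δ • v) • v ∂σ) e = ∫ v, g (y + δ • v) * inner ℝ v e ∂σ := by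
    rw [real_inner_comm, ← integral_inner h_vec]
    simp only [inner_smul_right, real_inner_comm]
  rw [InnerProductSpace.toDual_apply_apply, real_inner_smul_left, h_inner,
    smul_apply, smul_apply, ContinuousLinearMap.integral_apply h_int, h_gauss, h_vol]
  simp only [smul_eq_mul]
  field_simp
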